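/- (Centering at an arbitrary warping.) Let γ₁, …, γₙ ∈ Γ₁ be warping functions, let γ* ∈ Γ₁ be any fixed warping, and define the CLR mean warping γ̄ = ψ_B⁻¹((1/n)·Σᵢ₌₁ⁿ ψ_B(γᵢ)). Then (1/n)·Σᵢ₌₁ⁿ ψ_B(γᵢ ∘ γ̄⁻¹ ∘ γ*)(t) = ψ_B(γ*)(t) for all t ∈ [0,1]; that is, the CLR mean of the recentered warpings {γᵢ ∘ γ̄⁻¹ ∘ γ*} equals γ*. -/

import Mathlib

open Set MeasureTheory

/-- The centered log-ratio (CLR) transform `ψ_B`, expressed in terms of the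
derivative function `g = γ′` of a warping function:
`ψ_B(γ)(t) = log γ′(t) − ∫₀¹ log γ′(s) ds`. -/
noncomputable def clr (g : ℝ → ℝ) (t : ℝ) : ℝ :=
  Real.log (g t) - ∫ s in (0:ℝ)..1, Real.log (g s)

/-- The inverse CLR transform `ψ_B⁻¹(h)(t) = (∫₀ᵗ exp h) / (∫₀¹ exp h)`. -/
noncomputable def psiInv (h : ℝ → ℝ) (t : ℝ) : ℝ :=
  (∫ s in (0:ℝ)..t, Real.exp (h s)) / ∫ s in (0:ℝ)..1, Real.exp (h s)

/-- `γ` is a warping function in `Γ₁`, with (continuous) derivative `γ′` on `[0,1]`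
bounded by `0 < m ≤ γ′ ≤ M`. -/
def IsWarping (γ γ' : ℝ → ℝ) (m M : ℝ) : Prop :=
  γ 0 = 0 ∧ γ 1 = 1 ∧ Set.MapsTo γ (Set.Icc 0 1) (Set.Icc 0 1) ∧
  (∀ t ∈ Set.Icc (0:ℝ) 1, HasDerivWithinAt γ (γ' t) (Set.Icc 0 1) t) ∧
  ContinuousOn γ' (Set.Icc 0 1) ∧ 0 < m ∧
  ∀ t ∈ Set.Icc (0:ℝ) 1, m ≤ γ' t ∧ γ' t ≤ M

/-!
Differentiating `ψ_B⁻¹(h) ∘ δ = id` gives `h(δ t) + log δ′(t) = log ∫₀¹ exp h`. For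
`h = ∑ᵢ wᵢ ψ_B(γᵢ)` with `∑ᵢ wᵢ = 1`, this says that `∑ᵢ wᵢ log (γᵢ ∘ δ)′` is constant. Composing
with `γ*` turns it into a constant plus `log γ*′`, and `ψ_B` does not see the constant.
-/

/-- The weighted mean `∑ᵢ wᵢ ψ_B(γᵢ)` of CLR transforms, in terms of the derivatives `g i = γᵢ′`.
Applying `psiInv` to it yields the CLR mean warping. -/
noncomputable def clrMean {ι : Type*} [Fintype ι] (w : ι → ℝ) (g : ι → ℝ → ℝ) (t : ℝ) : ℝ :=
  ∑ i, w i * clr (g i) t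

/-- The derivative `(g ∘ φ) · φ'` of `γ ∘ φ`, where `g = γ′`. The function `φ'` is passed
separately because it is a one-sided derivative at the endpoints of `[0, 1]`. -/
def pullbackDensity (g φ φ' : ℝ → ℝ) (t : ℝ) : ℝ :=
  g (φ t) * φ' t

namespace IsWarping

variable {γ γ' : ℝ → ℝ} {m M t : ℝ}

lemma mapsTo (h : IsWarping γ γ' m M) : MapsTo γ (Icc 0 1) (Icc 0 1) :=
  h.2.2.1

lemma hasDerivWithinAt (h : IsWarping γ γ' m M) (ht : t ∈ Icc (0 : ℝ) 1) :
    HasDerivWithinAt γ (γ' t) (Icc 0 1) t :=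
  h.2.2.2.1 t ht

lemma continuousOn (h : IsWarping γ γ' m M) : ContinuousOn γ (Icc 0 1) :=
  fun _ ht => (h.hasDerivWithinAt ht).continuousWithinAt

lemma continuousOn_deriv (h : IsWarping γ γ' m M) : ContinuousOn γ' (Icc 0 1) :=
  h.2.2.2.2.1

lemma deriv_pos (h : IsWarping γ γ' m M) (ht : t ∈ Icc (0 : ℝ) 1) : 0 < γ' t :=
  h.2.2.2.2.2.1.trans_le (h.2.2.2.2.2.2 t ht).1

end IsWarping

section PullbackDensity

variable {g φ φ' : ℝ → ℝ} {m M t : ℝ}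

lemma continuousOn_pullbackDensity (hg : ContinuousOn g (Icc 0 1)) (hφ : IsWarping φ φ' m M) :
    ContinuousOn (pullbackDensity g φ φ') (Icc 0 1) :=
  (hg.comp hφ.continuousOn hφ.mapsTo).mul hφ.continuousOn_deriv

lemma pullbackDensity_pos (hg : ∀ s ∈ Icc (0 : ℝ) 1, 0 < g s) (hφ : IsWarping φ φ' m M)
    (ht : t ∈ Icc (0 : ℝ) 1) : 0 < pullbackDensity g φ φ' t :=
  mul_pos (hg _ (hφ.mapsTo ht)) (hφ.deriv_pos ht)

lemma log_pullbackDensity (hg : ∀ s ∈ Icc (0 : ℝ) 1, 0 < g s) (hφ : IsWarping φ φ' m M)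
    (ht : t ∈ Icc (0 : ℝ) 1) :
    Real.log (pullbackDensity g φ φ' t) = Real.log (g (φ t)) + Real.log (φ' t) :=
  Real.log_mul (hg _ (hφ.mapsTo ht)).ne' (hφ.deriv_pos ht).ne'

end PullbackDensity

section PsiInv

variable {h : ℝ → ℝ}

lemma intervalIntegrable_exp_comp (hh : ContinuousOn h (Icc 0 1)) {t : ℝ}
    (ht : t ∈ Icc (0 : ℝ) 1) : IntervalIntegrable (fun s => Real.exp (h s)) volume 0 t :=
  (hh.rexp.mono (Icc_subset_Icc_right ht.2)).intervalIntegrable_of_Icc ht.1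

lemma integral_exp_comp_pos (hh : ContinuousOn h (Icc 0 1)) :
    0 < ∫ s in (0 : ℝ)..1, Real.exp (h s) :=
  intervalIntegral.intervalIntegral_pos_of_pos
    (intervalIntegrable_exp_comp hh (right_mem_Icc.2 zero_le_one)) (fun _ => Real.exp_pos _)
    zero_lt_one

lemma hasDerivWithinAt_psiInv (hh : ContinuousOn h (Icc 0 1)) {t : ℝ} (ht : t ∈ Icc (0 : ℝ) 1) :
    HasDerivWithinAt (psiInv h) (Real.exp (h t) / ∫ s in (0 : ℝ)..1, Real.exp (h s))
      (Icc 0 1) t := by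
  have : Fact (t ∈ Icc (0 : ℝ) 1) := ⟨ht⟩
  exact (intervalIntegral.integral_hasDerivWithinAt_right (intervalIntegrable_exp_comp hh ht)
    (hh.rexp.stronglyMeasurableAtFilter_nhdsWithin measurableSet_Icc t)
    (hh.rexp t ht)).div_const _

variable {δ : ℝ → ℝ} {d t : ℝ}

lemma exp_mul_deriv_of_leftInvOn_psiInv (hh : ContinuousOn h (Icc 0 1))
    (hδ : MapsTo δ (Icc 0 1) (Icc 0 1)) (hinv : LeftInvOn (psiInv h) δ (Icc 0 1))
    (ht : t ∈ Icc (0 : ℝ) 1) (hd : HasDerivWithinAt δ d (Icc 0 1) t) :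
    Real.exp (h (δ t)) * d = ∫ s in (0 : ℝ)..1, Real.exp (h s) := by
  have deriv_comp := (hasDerivWithinAt_psiInv hh (hδ ht)).comp t hd hδ
  have deriv_id : HasDerivWithinAt (psiInv h ∘ δ) 1 (Icc 0 1) t :=
    (hasDerivWithinAt_id t _).congr hinv (hinv ht)
  have chain_rule := (uniqueDiffOn_Icc zero_lt_one t ht).eq_deriv _ deriv_comp deriv_id
  rwa [div_mul_eq_mul_div, div_eq_one_iff_eq (integral_exp_comp_pos hh).ne'] at chain_rule

lemma add_log_deriv_of_leftInvOn_psiInv (hh : ContinuousOn h (Icc 0 1))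
    (hδ : MapsTo δ (Icc 0 1) (Icc 0 1)) (hinv : LeftInvOn (psiInv h) δ (Icc 0 1))
    (ht : t ∈ Icc (0 : ℝ) 1) (hd : HasDerivWithinAt δ d (Icc 0 1) t) :
    h (δ t) + Real.log d = Real.log (∫ s in (0 : ℝ)..1, Real.exp (h s)) := by
  have exp_mul := exp_mul_deriv_of_leftInvOn_psiInv hh hδ hinv ht hd
  have d_ne_zero : d ≠ 0 :=
    right_ne_zero_of_mul (exp_mul.trans_ne (integral_exp_comp_pos hh).ne')
  rw [← exp_mul, Real.log_mul (Real.exp_ne_zero _) d_ne_zero, Real.log_exp]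

end PsiInv

section ClrMean

variable {ι : Type*} [Fintype ι] {w : ι → ℝ} {g : ι → ℝ → ℝ}

lemma continuousOn_clr {f : ℝ → ℝ} (hf : ContinuousOn f (Icc 0 1))
    (hpos : ∀ s ∈ Icc (0 : ℝ) 1, 0 < f s) : ContinuousOn (clr f) (Icc 0 1) :=
  (hf.log fun s hs => (hpos s hs).ne').sub continuousOn_const

lemma continuousOn_clrMean (hg : ∀ i, ContinuousOn (g i) (Icc 0 1))
    (hpos : ∀ i, ∀ s ∈ Icc (0 : ℝ) 1, 0 < g i s) : ContinuousOn (clrMean w g) (Icc 0 1) :=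
  continuousOn_finsetSum _ fun i _ => continuousOn_const.mul (continuousOn_clr (hg i) (hpos i))

lemma clrMean_eq_sum_mul_log_sub_sum_mul_integral (t : ℝ) :
    clrMean w g t =
      ∑ i, w i * Real.log (g i t) - ∑ i, w i * ∫ s in (0 : ℝ)..1, Real.log (g i s) := by
  simp only [clrMean, clr, mul_sub, Finset.sum_sub_distrib]

lemma eqOn_clrMean_clr_of_sum_mul_log_eq {f : ℝ → ℝ} {c : ℝ}
    (hint : ∀ i, IntervalIntegrable (fun s => Real.log (g i s)) volume 0 1)
    (hlog : ∀ s ∈ Icc (0 : ℝ) 1, ∑ i, w i * Real.log (g i s) = c + Real.log (f s)) :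
    EqOn (clrMean w g) (clr f) (Icc 0 1) := by
  have hint_mul : ∀ i ∈ Finset.univ,
      IntervalIntegrable (fun s => w i * Real.log (g i s)) volume 0 1 :=
    fun i _ => (hint i).const_mul (w i)
  have hint_sum : IntervalIntegrable (fun s => ∑ i, w i * Real.log (g i s)) volume 0 1 := by
    simpa only [Finset.sum_fn] using IntervalIntegrable.sum _ hint_mul
  have integral_log : ∫ s in (0 : ℝ)..1, Real.log (f s) =
      (∑ i, w i * ∫ s in (0 : ℝ)..1, Real.log (g i s)) - c :=
    calc ∫ s in (0 : ℝ)..1, Real.log (f s)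
        = ∫ s in (0 : ℝ)..1, ((∑ i, w i * Real.log (g i s)) - c) := by
          refine intervalIntegral.integral_congr fun s hs => ?_
          rw [uIcc_of_le zero_le_one] at hs
          exact eq_sub_of_add_eq' (hlog s hs).symm
      _ = (∑ i, w i * ∫ s in (0 : ℝ)..1, Real.log (g i s)) - c := by
          rw [intervalIntegral.integral_sub hint_sum intervalIntegrable_const,
            intervalIntegral.integral_finsetSum hint_mul]
          simp only [intervalIntegral.integral_const_mul, intervalIntegral.integral_const,
            sub_zero, one_smul]
  intro t ht
  rw [clrMean_eq_sum_mul_log_sub_sum_mul_integral, hlog t ht, clr, integral_log]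
  ring

lemma sum_mul_log_pullbackDensity {φ φ' : ℝ → ℝ} {m M t : ℝ} (hw : ∑ i, w i = 1)
    (hpos : ∀ i, ∀ s ∈ Icc (0 : ℝ) 1, 0 < g i s) (hφ : IsWarping φ φ' m M)
    (ht : t ∈ Icc (0 : ℝ) 1) :
    ∑ i, w i * Real.log (pullbackDensity (g i) φ φ' t) =
      ∑ i, w i * Real.log (g i (φ t)) + Real.log (φ' t) := by
  simp only [log_pullbackDensity (hpos _) hφ ht, mul_add, Finset.sum_add_distrib,
    ← Finset.sum_mul, hw, one_mul]

lemma sum_mul_log_pullbackDensity_of_leftInvOn_psiInv {δ δ' : ℝ → ℝ} {m M t : ℝ}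
    (hw : ∑ i, w i = 1) (hg : ∀ i, ContinuousOn (g i) (Icc 0 1))
    (hpos : ∀ i, ∀ s ∈ Icc (0 : ℝ) 1, 0 < g i s) (hδ : IsWarping δ δ' m M)
    (hinv : LeftInvOn (psiInv (clrMean w g)) δ (Icc 0 1)) (ht : t ∈ Icc (0 : ℝ) 1) :
    ∑ i, w i * Real.log (pullbackDensity (g i) δ δ' t) =
      Real.log (∫ s in (0 : ℝ)..1, Real.exp (clrMean w g s)) +
        ∑ i, w i * ∫ s in (0 : ℝ)..1, Real.log (g i s) := by
  have log_deriv := add_log_deriv_of_leftInvOn_psiInv (continuousOn_clrMean hg hpos) hδ.mapsTo hinv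
    ht (hδ.hasDerivWithinAt ht)
  rw [clrMean_eq_sum_mul_log_sub_sum_mul_integral] at log_deriv
  rw [sum_mul_log_pullbackDensity hw hpos hδ ht]
  linarith

lemma eqOn_clrMean_pullbackDensity_of_sum_mul_log_eq_const {φ φ' : ℝ → ℝ} {m M c : ℝ}
    (hw : ∑ i, w i = 1) (hg : ∀ i, ContinuousOn (g i) (Icc 0 1))
    (hpos : ∀ i, ∀ s ∈ Icc (0 : ℝ) 1, 0 < g i s) (hφ : IsWarping φ φ' m M)
    (hlog : ∀ s ∈ Icc (0 : ℝ) 1, ∑ i, w i * Real.log (g i s) = c) :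
    EqOn (clrMean w fun i => pullbackDensity (g i) φ φ') (clr φ') (Icc 0 1) := by
  have hint : ∀ i, IntervalIntegrable (fun s => Real.log (pullbackDensity (g i) φ φ' s))
      volume 0 1 := fun i =>
    ((continuousOn_pullbackDensity (hg i) hφ).log fun s hs =>
      (pullbackDensity_pos (hpos i) hφ hs).ne').intervalIntegrable_of_Icc zero_le_one
  refine eqOn_clrMean_clr_of_sum_mul_log_eq (c := c) hint fun s hs => ?_
  rw [sum_mul_log_pullbackDensity hw hpos hφ hs, hlog _ (hφ.mapsTo hs)]

theorem centering_at_arbitrary_warping_general {γs γs' δ δ' : ℝ → ℝ} {ms Ms mδ Mδ : ℝ}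
    (hw : ∑ i, w i = 1) (hg : ∀ i, ContinuousOn (g i) (Icc 0 1))
    (hpos : ∀ i, ∀ s ∈ Icc (0 : ℝ) 1, 0 < g i s)
    (hγs : IsWarping γs γs' ms Ms) (hδ : IsWarping δ δ' mδ Mδ)
    (hinv : LeftInvOn (psiInv (clrMean w g)) δ (Icc 0 1)) :
    EqOn (clrMean w fun i => pullbackDensity (pullbackDensity (g i) δ δ') γs γs') (clr γs')
      (Icc 0 1) :=
  eqOn_clrMean_pullbackDensity_of_sum_mul_log_eq_const hw
    (fun i => continuousOn_pullbackDensity (hg i) hδ)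
    (fun i _ => pullbackDensity_pos (hpos i) hδ) hγs
    fun _ => sum_mul_log_pullbackDensity_of_leftInvOn_psiInv hw hg hpos hδ hinv

end ClrMean

/-- centering at an arbitrary warping: let `γ₁, …, γₙ ∈ Γ₁`, let
`γ* ∈ Γ₁` be fixed, and let `γ̄ = ψ_B⁻¹((1/n)·Σᵢ ψ_B(γᵢ))` be the CLR mean
warping, with inverse `δ = γ̄⁻¹ ∈ Γ₁` (with derivative `δ′`).  Then the recentered
warpings `γᵢ ∘ γ̄⁻¹ ∘ γ*` (with derivatives `t ↦ γᵢ′(δ(γ* t))·δ′(γ* t)·γ*′(t)`)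
satisfy `(1/n)·Σᵢ ψ_B(γᵢ ∘ γ̄⁻¹ ∘ γ*)(t) = ψ_B(γ*)(t)` for all `t ∈ [0,1]`;
that is, their CLR mean equals `γ*`. -/
theorem centering_at_arbitrary_warping
    (n : ℕ) (hn : 0 < n)
    (γ : Fin n → ℝ → ℝ) (γ' : Fin n → ℝ → ℝ) (m M : Fin n → ℝ)
    (hγ : ∀ i, IsWarping (γ i) (γ' i) (m i) (M i))
    (γs γs' : ℝ → ℝ) (ms Ms : ℝ) (hγs : IsWarping γs γs' ms Ms)
    (δ δ' : ℝ → ℝ) (mδ Mδ : ℝ)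
    (hδ : IsWarping δ δ' mδ Mδ)
    (hinv₁ : ∀ t ∈ Set.Icc (0:ℝ) 1,
      δ (psiInv (fun s => (1 / (n:ℝ)) * ∑ i : Fin n, clr (γ' i) s) t) = t)
    (hinv₂ : ∀ t ∈ Set.Icc (0:ℝ) 1,
      psiInv (fun s => (1 / (n:ℝ)) * ∑ i : Fin n, clr (γ' i) s) (δ t) = t) :
    ∀ t ∈ Set.Icc (0:ℝ) 1,
      (1 / (n:ℝ)) * ∑ i : Fin n,
        clr (fun s => γ' i (δ (γs s)) * δ' (γs s) * γs' s) t = clr γs' t := by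
  have sum_weights : ∑ _i : Fin n, 1 / (n : ℝ) = 1 := by
    simp [hn.ne']
  simp only [Finset.mul_sum] at hinv₂ ⊢
  exact centering_at_arbitrary_warping_general sum_weights (fun i => (hγ i).continuousOn_deriv)
    (fun i _ => (hγ i).deriv_pos) hγs hδ hinv₂
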